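/- If a collection of m paths in a graph is such that any two of them intersect in at most one common contiguous subpath (because they are unique shortest paths between their endpoints), then the union of the paths has at most O(m²) vertices of degree greater than 2, and in particular at most 2m² + 2m such vertices. -/

import Mathlib

/-- An internal vertex of a path has exactly two neighbours in the path. -/
theorem SimpleGraph.Walk.IsPath.ncard_neighborSet_toSubgraph_of_ne {V : Type*}
    {G : SimpleGraph V} {a b v : V} {w : G.Walk a b} (hw : w.IsPath)
    (hv : v ∈ w.toSubgraph.verts) (ha : v ≠ a) (hb : v ≠ b) :
    (w.toSubgraph.neighborSet v).ncard = 2 := by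
  rw [SimpleGraph.Walk.mem_verts_toSubgraph, SimpleGraph.Walk.mem_support_iff_exists_getVert] at hv
  obtain ⟨n, rfl, hn⟩ := hv
  refine hw.ncard_neighborSet_toSubgraph_internal_eq_two ?_ (lt_of_le_of_ne hn ?_)
  · rintro rfl
    simp at ha
  · rintro rfl
    simp at hb

/-- If a collection of `m` paths in a graph is such that any two of them intersect in at most
one common contiguous subpath, then the union of the paths has at most `2m² + 2m` vertices of
degree greater than `2` (degree measured in the union subgraph). -/
theorem union_of_paths_high_degree {V : Type*} {G : SimpleGraph V} (m : ℕ)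
    (H : Fin m → G.Subgraph)
    (hpath : ∀ i, ∃ (a b : V) (w : G.Walk a b), w.IsPath ∧ H i = w.toSubgraph)
    (hinter : ∀ i j, i ≠ j →
      H i ⊓ H j = ⊥ ∨
      ∃ (a b : V) (w : G.Walk a b), w.IsPath ∧ H i ⊓ H j = w.toSubgraph) :
    {v : V | 2 < ((⨆ i, H i).neighborSet v).ncard}.ncard ≤ 2 * m ^ 2 + 2 * m := by
  classical
  have endpoints : ∀ i j, ∃ a b : V, ∀ v ∈ (H i ⊓ H j).verts, v ≠ a → v ≠ b →
      ((H i ⊓ H j).neighborSet v).ncard = 2 := by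
    intro i j
    obtain ⟨a, b, w, hw, hi⟩ := hpath i
    by_cases hij : i = j
    · subst hij
      rw [inf_idem, hi]
      exact ⟨a, b, fun v hv => hw.ncard_neighborSet_toSubgraph_of_ne hv⟩
    · obtain h | ⟨c, d, p, hp, h⟩ := hinter i j hij
      · rw [h]
        exact ⟨a, b, fun v hv => by simp at hv⟩
      · rw [h]
        exact ⟨c, d, fun v hv => hp.ncard_neighborSet_toSubgraph_of_ne hv⟩
  choose a b hab using endpoints
  let S : Finset V := Finset.univ.biUnion fun p : Fin m × Fin m => {a p.1 p.2, b p.1 p.2}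
  have hS : S.card ≤ 2 * m ^ 2 := by
    refine (Finset.card_biUnion_le_card_mul _ _ 2 fun p _ => Finset.card_le_two).trans ?_
    simp only [Finset.card_univ, Fintype.card_prod, Fintype.card_fin]
    exact le_of_eq (by ring)
  have hsub : {v : V | 2 < ((⨆ i, H i).neighborSet v).ncard} ⊆ S := by
    intro v hv
    by_contra hvS
    have hint : ∀ i j, v ∈ (H i).verts → v ∈ (H j).verts →
        ((H i ⊓ H j).neighborSet v).ncard = 2 := by
      intro i j hi hj
      refine hab i j v ⟨hi, hj⟩ ?_ ?_ <;> rintro rfl <;> refine hvS ?_ <;>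
        exact Finset.mem_coe.2 (Finset.mem_biUnion.2 ⟨(i, j), Finset.mem_univ _, by simp⟩)
    have hself : ∀ i, v ∈ (H i).verts → ((H i).neighborSet v).ncard = 2 := by
      intro i hi
      simpa using hint i i hi hi
    have heq : ∀ i j, v ∈ (H i).verts → v ∈ (H j).verts →
        (H i ⊓ H j).neighborSet v = (H j).neighborSet v := by
      intro i j hi hj
      refine Set.eq_of_subset_of_ncard_le (fun u hu => hu.2) ?_
        (Set.finite_of_ncard_ne_zero (by simp [hself j hj]))
      rw [hself j hj, hint i j hi hj]
    have hv' : 2 < ((⨆ i, H i).neighborSet v).ncard := hv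
    obtain ⟨u, hu⟩ := Set.nonempty_of_ncard_ne_zero (by omega :
      ((⨆ i, H i).neighborSet v).ncard ≠ 0)
    obtain ⟨i, hi⟩ := SimpleGraph.Subgraph.iSup_adj.1 hu
    have hle : (⨆ i, H i).neighborSet v ⊆ (H i).neighborSet v := by
      intro x hx
      obtain ⟨j, hj⟩ := SimpleGraph.Subgraph.iSup_adj.1 hx
      have hmem : x ∈ (H i ⊓ H j).neighborSet v := by
        rw [heq i j hi.fst_mem hj.fst_mem]
        exact hj
      exact hmem.1
    have hcard := Set.ncard_le_ncard hle
      (Set.finite_of_ncard_ne_zero (by simp [hself i hi.fst_mem]))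
    rw [hself i hi.fst_mem] at hcard
    omega
  calc _ ≤ (S : Set V).ncard := Set.ncard_le_ncard hsub S.finite_toSet
    _ = S.card := Set.ncard_coe_finset S
    _ ≤ 2 * m ^ 2 + 2 * m := by omega
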